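/- arXiv:0907.4906 — 5 statements merged into one kernel-verified Lean document; each statement's English description precedes it below -/
import Mathlib

section
/- Let G be a finite simple 2-connected graph with at least 4 vertices in which every vertex has degree at least 3. Then there exists a vertex v of G such that the induced subgraph of G on V(G) \ {v} is 2-connected. -/
/-!
Suppose every single-vertex deletion destroys 2-connectedness. As `G` is 2-connected, every vertex
`w` then lies in a two-element separator `{w, x}` (`exists_separates`). Among all ways of splitting
off a nonempty set `A` from the rest of the graph by two vertices `u, v`, take one with `|A|`
minimal, pick `w ∈ A`, and let `{w, x}` be a separator with sides `D` and `D'`; write `B` for the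
vertices outside `A ∪ {u, v}`.

Each of `D`, `D'` contains `u` or `v` (`Separates.mem_or_mem`): otherwise its part outside `A` can
only be left through `x`, so this part is empty and the side is a proper subset of `A`,
contradicting minimality. So say `u ∈ D` and `v ∈ D'`. If `x ∈ A`, the parts of `B` in `D` and `D'`
are split off by the single vertices `u` and `v`, so they are empty and `B = ∅`, which is absurd.
If `x ∈ B`, the parts of `A` in `D` and `D'` are split off by `{u, w}` and `{v, w}` and are smaller
than `A`, so they are empty; then `A = {w}` and `w` has no neighbours besides `u` and `v`,
contradicting degree at least 3 (`Separates.false_of_mem`).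
-/

/-- A graph is 2-connected if it is connected and remains connected after
deleting any single vertex (together with its incident edges). -/
def TwoConnected {V : Type*} (G : SimpleGraph V) : Prop :=
  G.Connected ∧ ∀ v : V, (G.induce ({v}ᶜ : Set V)).Connected

/-- The nonempty set `X` is split off from a nonempty rest of the graph by the vertices `p` and `q`.
The case `p = q` is allowed and says that `p` alone splits off `X`. -/
def Separates {V : Type*} (G : SimpleGraph V) (X : Set V) (p q : V) : Prop :=
  X.Nonempty ∧ p ∉ X ∧ q ∉ X ∧ (∀ a ∈ X, ∀ b, G.Adj a b → b ∈ X ∨ b = p ∨ b = q) ∧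
    ∃ z, z ∉ X ∧ z ≠ p ∧ z ≠ q

namespace Separates

variable {V : Type*} {G : SimpleGraph V} {A D : Set V} {u v w x : V}

theorem symm (h : Separates G A u v) : Separates G A v u := by
  obtain ⟨h1, h2, h3, h4, z, h5⟩ := h
  exact ⟨h1, h3, h2, fun a ha b hb => by grind, z, by grind⟩

/-- The other side of a separation. -/
theorem compl (h : Separates G D w x) :
    Separates G {z | z ∉ D ∧ z ≠ w ∧ z ≠ x} w x := by
  obtain ⟨⟨y, hy⟩, h2, h3, h4, z, h5⟩ := h
  refine ⟨⟨z, h5⟩, by simp, by simp, fun a ha b hb => ?_, y, by grind⟩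
  have := h4 b
  have := hb.symm
  grind

/-- A side of a separation by `{w, x}`, with `w` in a minimal side `A`, meets `{u, v}`. -/
theorem mem_or_mem [Finite V] (hcut : ∀ X s, ¬ Separates G X s s)
    (hmin : ∀ X p q, Separates G X p q → A.ncard ≤ X.ncard)
    (hA : Separates G A u v) (hD : Separates G D w x) (hw : w ∈ A) : u ∈ D ∨ v ∈ D := by
  by_contra! hcon
  obtain ⟨hu, hv⟩ := hcon
  have hmin' := hmin D w x hD
  have hwx : w ≠ x := by
    rintro rfl
    exact hcut _ _ hD
  obtain ⟨-, huA, hvA, hadj, -⟩ := hA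
  obtain ⟨-, hwD, hxD, hadj', -⟩ := hD
  have hB : ∀ y ∈ D, y ∈ A := by
    intro y hy
    by_contra hyA
    -- A step from `D \ A` into `A`, in particular to `w`, would start at `u` or `v`.
    exact hcut (D \ A) x ⟨⟨y, hy, hyA⟩, fun h => hxD h.1, fun h => hxD h.1,
      fun a ha b hb => by
        have := hadj' a ha.1 b hb
        have := hadj b
        have := hb.symm
        grind, w, by grind, by grind⟩
  have : D.ncard < A.ncard :=
    Set.ncard_lt_ncard ((Set.ssubset_iff_of_subset hB).2 ⟨w, hw, hwD⟩)
  omega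

/-- A separation by `{w, x}` with `w` in the minimal side `A` cannot have `u` and `v` on different
sides. -/
theorem false_of_mem [Finite V] (hcut : ∀ X s, ¬ Separates G X s s)
    (hmin : ∀ X p q, Separates G X p q → A.ncard ≤ X.ncard)
    (hdeg : 3 ≤ (G.neighborSet w).ncard)
    (hA : Separates G A u v) (hD : Separates G D w x) (hw : w ∈ A)
    (hu : u ∈ D) (hv : v ∉ D) (hvx : v ≠ x) : False := by
  obtain ⟨-, huA, hvA, hadj, z, hz⟩ := hA
  obtain ⟨-, hwD, hxD, hadj', -⟩ := hD
  by_cases hxA : x ∈ A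
  · by_cases hzD : z ∈ D
    · refine hcut (D \ (A ∪ {u})) u ⟨⟨z, by grind⟩, by grind, by grind, fun a ha b hb => ?_,
        w, by grind, by grind⟩
      have := hadj' a ha.1 b hb
      have := hadj b
      have := hb.symm
      grind
    · refine hcut {y | y ∉ D ∧ y ∉ A ∧ y ≠ v} v ⟨⟨z, by grind⟩, by grind, by grind,
        fun a ha b hb => ?_, w, by grind, by grind⟩
      have := hadj' b
      have := hadj b
      have := hb.symm
      grind
  · have hlt : ∀ X ⊆ A, w ∉ X → X.ncard < A.ncard := fun X hX hwX =>
      Set.ncard_lt_ncard ((Set.ssubset_iff_of_subset hX).2 ⟨w, hw, hwX⟩)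
    have hAw : ∀ y ∈ A, y = w := by
      intro y hy
      by_contra hyw
      by_cases hyD : y ∈ D
      · have hs : Separates G (A ∩ D) u w := by
          refine ⟨⟨y, by grind⟩, by grind, by grind, fun a ha b hb => ?_, v, by grind⟩
          have := hadj' a ha.2 b hb
          have := hadj a ha.1 b hb
          grind
        have := hmin _ _ _ hs
        have := hlt (A ∩ D) Set.inter_subset_left (by grind)
        omega
      · have hs : Separates G (A \ (D ∪ {w})) v w := by
          refine ⟨⟨y, by grind⟩, by grind, by grind, fun a ha b hb => ?_, u, by grind⟩
          have := hadj' b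
          have := hb.symm
          have := hadj a ha.1 b hb
          grind
        have := hmin _ _ _ hs
        have := hlt (A \ (D ∪ {w})) Set.sdiff_subset (by grind)
        omega
    have hsub : G.neighborSet w ⊆ {u, v} := by
      intro b hb
      have := hadj w hw b hb
      have := hAw b
      have := G.ne_of_adj hb
      grind
    have := Set.ncard_le_ncard hsub
    have := (Set.ncard_insert_le u {v}).trans_eq (by rw [Set.ncard_singleton])
    omega

end Separates

/-- A 2-connected graph has no cut vertex. -/
theorem TwoConnected.not_separates {V : Type*} {G : SimpleGraph V} (hG : TwoConnected G)
    (X : Set V) (s : V) : ¬ Separates G X s s := by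
  rintro ⟨⟨y, hy⟩, hs, -, hadj, z, hz, hzs, -⟩
  have hys : y ≠ s := fun h => hs (h ▸ hy)
  obtain ⟨p⟩ := (hG.2 s).preconnected ⟨y, hys⟩ ⟨z, hzs⟩
  have key : ∀ (a b : ({s}ᶜ : Set V)), (G.induce ({s}ᶜ : Set V)).Walk a b →
      (a : V) ∈ X → (b : V) ∈ X := by
    intro a b p
    induction p with
    | nil => exact id
    | @cons a b c h p ih =>
      intro ha
      refine ih ?_
      have h1 : (b : V) ≠ s := b.2
      have h2 : G.Adj a b := h
      have := hadj a ha b h2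
      grind
  exact hz (key _ _ p hy)

/-- If deleting `w` destroys 2-connectedness, then `w` belongs to a separating pair. -/
theorem exists_separates {V : Type*} [Fintype V] {G : SimpleGraph V}
    (hcard : 4 ≤ Fintype.card V) (hG : TwoConnected G) (w : V)
    (h : ¬ TwoConnected (G.induce ({w}ᶜ : Set V))) : ∃ D x, Separates G D w x := by
  classical
  have h' : ∃ x, ¬ ((G.induce ({w}ᶜ : Set V)).induce ({x}ᶜ : Set _)).Connected := by
    by_contra! hc
    exact h ⟨hG.2 w, hc⟩
  obtain ⟨x, hx⟩ := h'
  obtain ⟨c, hc⟩ : ∃ c, c ∉ ({w, (x : V)} : Finset V) := by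
    by_contra! hc
    have h1 := Finset.card_le_card (fun a _ => hc a : Finset.univ ⊆ ({w, (x : V)} : Finset V))
    have h2 := Finset.card_le_two (a := w) (b := (x : V))
    rw [Finset.card_univ] at h1
    omega
  simp only [Finset.mem_insert, Finset.mem_singleton, not_or] at hc
  rw [SimpleGraph.connected_iff] at hx
  have hne : Nonempty (({x}ᶜ : Set ({w}ᶜ : Set V))) :=
    ⟨⟨⟨c, hc.1⟩, fun h => hc.2 (congrArg Subtype.val h)⟩⟩
  have hx' : ¬ ((G.induce ({w}ᶜ : Set V)).induce ({x}ᶜ : Set _)).Preconnected :=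
    fun hp => hx ⟨hp, hne⟩
  simp only [SimpleGraph.Preconnected, not_forall] at hx'
  obtain ⟨a, b, hab⟩ := hx'
  have hval : ∀ d : ({x}ᶜ : Set ({w}ᶜ : Set V)), (d : V) ≠ w ∧ (d : V) ≠ x :=
    fun d => ⟨d.1.2, fun h => d.2 (Subtype.ext h)⟩
  refine ⟨{y | ∃ d : ({x}ᶜ : Set ({w}ᶜ : Set V)), (d : V) = y ∧
    ((G.induce ({w}ᶜ : Set V)).induce ({x}ᶜ : Set _)).Reachable a d}, x,
    ⟨a, a, rfl, .rfl⟩, ?_, ?_, ?_, b, ?_, (hval b).1, (hval b).2⟩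
  · rintro ⟨d, hd, -⟩
    exact (hval d).1 hd
  · rintro ⟨d, hd, -⟩
    exact (hval d).2 hd
  · rintro _ ⟨d, rfl, hd⟩ e hde
    by_cases hew : e = w
    · exact .inr (.inl hew)
    by_cases hex : e = x
    · exact .inr (.inr hex)
    let e' : ({x}ᶜ : Set ({w}ᶜ : Set V)) := ⟨⟨e, hew⟩, fun h => hex (congrArg Subtype.val h)⟩
    have hadj : ((G.induce ({w}ᶜ : Set V)).induce ({x}ᶜ : Set _)).Adj d e' := hde
    exact .inl ⟨e', rfl, hd.trans hadj.reachable⟩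
  · rintro ⟨d, hd, hr⟩
    have : d = b := Subtype.ext (Subtype.ext hd)
    exact hab (this ▸ hr)

/-- If `G` is a finite simple 2-connected graph on at least 4 vertices in
which every vertex has degree at least 3, then some vertex `v` can be
subtracted so that the induced subgraph on `V(G) \ {v}` is 2-connected. -/
theorem exists_subtractable_vertex {V : Type*} [Fintype V]
    (G : SimpleGraph V)
    (hcard : 4 ≤ Fintype.card V) (hG : TwoConnected G)
    (hdeg : ∀ w : V, 3 ≤ (G.neighborSet w).ncard) :
    ∃ v : V, TwoConnected (G.induce ({v}ᶜ : Set V)) := by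
  by_contra! hcon
  have hsep := fun w => exists_separates hcard hG w (hcon w)
  have hcut := hG.not_separates
  obtain ⟨v₀⟩ : Nonempty V := hG.1.nonempty
  obtain ⟨D₀, x₀, h₀⟩ := hsep v₀
  obtain ⟨A, ⟨u, v, hA⟩, hmin⟩ := exists_minimalFor_of_wellFoundedLT
    (fun X : Set V => ∃ p q, Separates G X p q) Set.ncard ⟨D₀, v₀, x₀, h₀⟩
  have hmin' : ∀ X p q, Separates G X p q → A.ncard ≤ X.ncard := fun X p q h =>
    (le_total A.ncard X.ncard).elim id (fun h' => hmin ⟨p, q, h⟩ h')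
  obtain ⟨w, hw⟩ := hA.1
  obtain ⟨D, x, hD⟩ := hsep w
  have h1 := Separates.mem_or_mem hcut hmin' hA hD hw
  have h2 := Separates.mem_or_mem hcut hmin' hA hD.compl hw
  simp only [Set.mem_ofPred_eq] at h2
  have h3 : (u ∈ D ∧ v ∉ D ∧ v ≠ x) ∨ (v ∈ D ∧ u ∉ D ∧ u ≠ x) := by tauto
  rcases h3 with ⟨hu, hv, hvx⟩ | ⟨hv, hu, hux⟩
  · exact Separates.false_of_mem hcut hmin' (hdeg w) hA hD hw hu hv hvx
  · exact Separates.false_of_mem hcut hmin' (hdeg w) hA.symm hD hw hv hu hux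
end

section
/- Let G be a finite simple 2-connected graph with at least 4 vertices. Then either there exists a vertex v of G such that the induced subgraph of G on V(G) \ {v} is 2-connected, or G has at least four vertices of degree exactly 2. -/
/-- `F` is a nonempty union of components of `G - {x, y}`, but not all of `G - {x, y}`. -/
structure Fragment {V : Type*} (G : SimpleGraph V) (F : Set V) (x y : V) : Prop where
  ne : x ≠ y
  left_notMem : x ∉ F
  right_notMem : y ∉ F
  nonempty : ∃ u, u ∈ F
  outside : ∃ z, z ∉ F ∧ z ≠ x ∧ z ≠ y
  closed : ∀ u ∈ F, ∀ v, G.Adj u v → v ∈ F ∨ v = x ∨ v = y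

/-- The absence of cut vertices, in terms of vertex sets: a nonempty set whose only possible outside
neighbour is `t` misses no vertex but `t`. -/
def NoCutVertex {V : Type*} (G : SimpleGraph V) : Prop :=
  ∀ (F : Set V) (t : V), t ∉ F → (∃ u, u ∈ F) →
    (∀ u ∈ F, ∀ v, G.Adj u v → v ∈ F ∨ v = t) → ∀ z, z ∈ F ∨ z = t

/-- Every vertex belongs to a separating pair. -/
def AllInCut {V : Type*} (G : SimpleGraph V) : Prop :=
  ∀ v, ∃ w H, Fragment G H v w

section

variable {V : Type*} {G : SimpleGraph V}

/-! ### Connectivity in terms of vertex sets -/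

lemma mem_of_connected (hG : G.Connected) {S : Set V} (hne : ∃ u, u ∈ S)
    (hS : ∀ u ∈ S, ∀ v, G.Adj u v → v ∈ S) (z : V) : z ∈ S := by
  obtain ⟨u, hu⟩ := hne
  obtain ⟨p⟩ := hG.preconnected u z
  induction p with
  | nil => exact hu
  | cons h p ih => exact ih (hS _ hu _ h)

lemma exists_closed_of_not_connected [Nonempty V] (hG : ¬ G.Connected) :
    ∃ S : Set V, (∃ u, u ∈ S) ∧ (∃ z, z ∉ S) ∧ ∀ u ∈ S, ∀ v, G.Adj u v → v ∈ S := by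
  have h : ¬ G.Preconnected := fun h => hG ⟨h⟩
  unfold SimpleGraph.Preconnected at h
  push Not at h
  obtain ⟨a, b, hab⟩ := h
  exact ⟨{v | G.Reachable a v}, ⟨a, SimpleGraph.Reachable.refl a⟩, ⟨b, hab⟩,
    fun u hu v huv => SimpleGraph.Reachable.trans hu huv.reachable⟩

lemma TwoConnected.noCutVertex (hG : TwoConnected G) : NoCutVertex G := by
  intro F t ht ⟨u, hu⟩ hF z
  by_cases hz : z = t
  · exact Or.inr hz
  refine Or.inl ?_
  have hut : u ≠ t := fun h => ht (h ▸ hu)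
  refine mem_of_connected (hG.2 t) (S := {v | (v : V) ∈ F}) ⟨⟨u, hut⟩, hu⟩ ?_ ⟨z, hz⟩
  rintro ⟨a, ha⟩ haF ⟨b, hb⟩ hab
  exact (hF a haF b hab).resolve_right hb

lemma allInCut [Fintype V] (hcard : 4 ≤ Fintype.card V) (hG : TwoConnected G)
    (h : ¬ ∃ v : V, TwoConnected (G.induce ({v}ᶜ : Set V))) : AllInCut G := by
  classical
  intro v
  have h1 : ¬ TwoConnected (G.induce ({v}ᶜ : Set V)) := fun hv => h ⟨v, hv⟩
  unfold TwoConnected at h1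
  push Not at h1
  obtain ⟨⟨w, hw⟩, hcon⟩ := h1 (hG.2 v)
  have hwv : w ≠ v := hw
  obtain ⟨z, hz⟩ : ∃ z, z ∉ ({v, w} : Finset V) := by
    by_contra! hall
    have := Finset.card_le_card (fun z _ => hall z : Finset.univ ⊆ ({v, w} : Finset V))
    have := Finset.card_le_two (a := v) (b := w)
    rw [Finset.card_univ] at *
    omega
  simp only [Finset.mem_insert, Finset.mem_singleton, not_or] at hz
  have : Nonempty (({⟨w, hw⟩}ᶜ : Set ({v}ᶜ : Set V))) :=
    ⟨⟨⟨z, hz.1⟩, fun h => hz.2 (congrArg Subtype.val h)⟩⟩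
  obtain ⟨S, ⟨⟨⟨a, hav⟩, haw⟩, haS⟩, ⟨⟨⟨b, hbv⟩, hbw⟩, hbS⟩, hS⟩ :=
    exists_closed_of_not_connected hcon
  have hne : ∀ {c : V} {hc : c ∈ ({v}ᶜ : Set V)},
      (⟨c, hc⟩ : ({v}ᶜ : Set V)) ∈ ({⟨w, hw⟩}ᶜ : Set _) ↔ c ≠ w := by
    intro c hc
    simp [Subtype.ext_iff]
  refine ⟨w, {u | ∃ s ∈ S, (s : V) = u}, hwv.symm, ?_, ?_, ⟨a, _, haS, rfl⟩, ⟨b, ?_, hbv, hne.1 hbw⟩,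
    ?_⟩
  · rintro ⟨⟨⟨c, hc⟩, _⟩, _, hcv⟩
    exact hc hcv
  · rintro ⟨⟨⟨c, hc⟩, hc'⟩, _, hcw⟩
    exact hne.1 hc' hcw
  · rintro ⟨⟨⟨c, hc⟩, hc'⟩, hcS, rfl⟩
    exact hbS hcS
  · rintro _ ⟨⟨⟨c, hc⟩, hc'⟩, hcS, rfl⟩ d hcd
    by_cases hdv : d = v
    · exact Or.inr (Or.inl hdv)
    by_cases hdw : d = w
    · exact Or.inr (Or.inr hdw)
    exact Or.inl ⟨⟨⟨d, hdv⟩, hne.2 hdw⟩, hS _ hcS _ hcd, rfl⟩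

/-! ### Basic properties of fragments -/

lemma Fragment.symm {F : Set V} {x y : V} (h : Fragment G F x y) : Fragment G F y x :=
  ⟨h.ne.symm, h.right_notMem, h.left_notMem, h.nonempty,
    let ⟨z, a, b, c⟩ := h.outside; ⟨z, a, c, b⟩,
    fun u hu v huv => (h.closed u hu v huv).imp_right Or.symm⟩

lemma Fragment.compl {F : Set V} {x y : V} (h : Fragment G F x y) :
    Fragment G {z | z ∉ F ∧ z ≠ x ∧ z ≠ y} x y := by
  obtain ⟨h1, h2, h3, ⟨u, hu⟩, h5, h6⟩ := h
  refine ⟨h1, by simp, by simp, h5, ⟨u, by simp [hu], ?_, ?_⟩, ?_⟩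
  · rintro rfl; exact h2 hu
  · rintro rfl; exact h3 hu
  · rintro a ⟨ha, hax, hay⟩ b hab
    by_contra! hb
    simp only [Set.mem_ofPred_eq, not_and, not_not] at hb
    have hbF : b ∈ F := by
      by_contra hbF
      exact hb.2.2 (hb.1 hbF hb.2.1)
    rcases h6 b hbF a hab.symm with h | h | h <;> contradiction

lemma Fragment.exists_adj (hA : NoCutVertex G) {F : Set V} {x y : V} (h : Fragment G F x y) :
    ∃ u ∈ F, G.Adj x u := by
  by_contra! hno
  have := hA F y h.right_notMem h.nonempty (fun u hu v huv => by
    rcases h.closed u hu v huv with h1 | rfl | h1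
    · exact Or.inl h1
    · exact absurd huv.symm (hno u hu)
    · exact Or.inr h1) x
  exact this.elim h.left_notMem h.ne

/-! ### Uncrossing a fragment with a separating pair -/

/-- Uncrossing, when `x` and `y` are not on different sides of the separating pair `{v, w}`: a
side `H` containing neither of them meets `F` in a fragment with boundary `{v, w}`. -/
lemma subfragment_of_same_side (hA : NoCutVertex G) {F H : Set V} {x y v w : V}
    (hF : Fragment G F x y) (hv : v ∈ F) (hH : Fragment G H v w) (hx : x ∉ H) (hy : y ∉ H) :
    Fragment G (F ∩ H) v w := by
  obtain ⟨u, huH, hvu⟩ := hH.exists_adj hA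
  have huF : u ∈ F := by
    rcases hF.closed v hv u hvu with h | rfl | rfl
    · exact h
    · exact absurd huH hx
    · exact absurd huH hy
  obtain ⟨z, hz, hzv, hzw⟩ := hH.outside
  refine ⟨hH.ne, fun h => hH.left_notMem h.2, fun h => hH.right_notMem h.2, ⟨u, huF, huH⟩,
    ⟨z, fun h => hz h.2, hzv, hzw⟩, ?_⟩
  rintro a ⟨haF, haH⟩ b hab
  rcases hH.closed a haH b hab with hb | hb
  · rcases hF.closed a haF b hab with h | rfl | rfl
    · exact Or.inl ⟨h, hb⟩
    · exact absurd hb hx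
    · exact absurd hb hy
  · exact Or.inr hb

/-- Uncrossing, when `y ∉ H ∪ {w}` and `w ∉ F`: the part of `F` in `H`, if nonempty,
is a fragment with boundary `{v, x}`. -/
lemma subfragment_of_opposite_sides {F H : Set V} {x y v w : V}
    (hF : Fragment G F x y) (hv : v ∈ F) (hH : Fragment G H v w) (hy : y ∉ H)
    (hyw : y ≠ w) (hw : w ∉ F) (hne : ∃ u, u ∈ F ∩ H) :
    Fragment G (F ∩ H) v x := by
  refine ⟨?_, fun h => hH.left_notMem h.2, fun h => hF.left_notMem h.1, hne,
    ⟨y, fun h => hy h.2, ?_, hF.ne.symm⟩, ?_⟩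
  · rintro rfl; exact hF.left_notMem hv
  · rintro rfl; exact hF.right_notMem hv
  rintro a ⟨haF, haH⟩ b hab
  rcases hF.closed a haF b hab with h | h | rfl
  · rcases hH.closed a haH b hab with h' | h' | rfl
    · exact Or.inl ⟨h, h'⟩
    · exact Or.inr (Or.inl h')
    · exact absurd h hw
  · exact Or.inr (Or.inr h)
  · rcases hH.closed a haH b hab with h' | h' | rfl
    · exact absurd h' hy
    · exact Or.inr (Or.inl h')
    · exact absurd rfl hyw

/-- If the separating pair `{v, w}` lies inside `F` and `y ∉ H`, then `H` contains no point `z` of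
the other fragment of `{x, y}`: the part of that fragment in `H` has no outside neighbour but `x`,
so it is empty. -/
lemma notMem_of_pair_mem (hA : NoCutVertex G) {F H : Set V} {x y v w : V}
    (hF : Fragment G F x y) (hv : v ∈ F) (hw : w ∈ F) (hH : Fragment G H v w)
    (hy : y ∉ H) {z : V} (hz : z ∉ F ∧ z ≠ x ∧ z ≠ y) : z ∉ H := by
  intro hzH
  have hyF := hF.right_notMem
  refine (hA ({z | z ∉ F ∧ z ≠ x ∧ z ≠ y} ∩ H) x (by simp) ⟨z, hz, hzH⟩ ?_ y).elim
    (fun h => hy h.2) (fun h => hF.ne h.symm)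
  rintro a ⟨haF, haH⟩ b hab
  rcases hF.compl.closed a haF b hab with h | h | rfl
  · rcases hH.closed a haH b hab with h' | rfl | rfl
    · exact Or.inl ⟨h, h'⟩
    · exact absurd hv h.1
    · exact absurd hw h.1
  · exact Or.inr h
  · rcases hH.closed a haH b hab with h' | rfl | rfl <;> contradiction

/-- Uncrossing, when the separating pair `{v, w}` puts `x` and `y` on different sides. Then `w ∉ F`
by `notMem_of_pair_mem`, and the side containing `u` meets `F` in a fragment. -/
lemma exists_subfragment_of_opposite_sides (hA : NoCutVertex G) {F H : Set V} {x y v w u : V}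
    (hF : Fragment G F x y) (hv : v ∈ F) (hu : u ∈ F) (huv : u ≠ v) (hH : Fragment G H v w)
    (hx : x ∈ H) (hy : y ∉ H ∧ y ≠ v ∧ y ≠ w) :
    ∃ F' ⊆ F, v ∉ F' ∧ ∃ x' y', Fragment G F' x' y' := by
  have hxw : x ≠ w := fun h => hH.right_notMem (h ▸ hx)
  by_cases hw : w ∈ F
  · obtain ⟨z, hz⟩ := hF.outside
    have h1 := notMem_of_pair_mem hA hF hv hw hH hy.1 hz
    have h2 := notMem_of_pair_mem hA hF.symm hv hw hH.compl (fun h => h.1 hx)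
      (z := z) ⟨hz.1, hz.2.2, hz.2.1⟩
    refine absurd ⟨h1, ?_, ?_⟩ h2
    · rintro rfl; exact hz.1 hv
    · rintro rfl; exact hz.1 hw
  · by_cases huH : u ∈ H
    · exact ⟨F ∩ H, Set.inter_subset_left, fun h => hH.left_notMem h.2, v, x,
        subfragment_of_opposite_sides hF hv hH hy.1 hy.2.2 hw ⟨u, hu, huH⟩⟩
    · have huw : u ≠ w := fun h => hw (h ▸ hu)
      exact ⟨F ∩ _, Set.inter_subset_left, fun h => hH.compl.left_notMem h.2, v, y,
        subfragment_of_opposite_sides hF.symm hv hH.compl (fun h => h.1 hx) hxw hw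
          ⟨u, hu, huH, huv, huw⟩⟩

lemma exists_subfragment (hA : NoCutVertex G) (hB : AllInCut G) {F : Set V} {x y v u : V}
    (hF : Fragment G F x y) (hv : v ∈ F) (hu : u ∈ F) (huv : u ≠ v) :
    ∃ F' ⊆ F, v ∉ F' ∧ ∃ x' y', Fragment G F' x' y' := by
  obtain ⟨w, H, hH⟩ := hB v
  have hxv : x ≠ v := fun h => hF.left_notMem (h ▸ hv)
  have hyv : y ≠ v := fun h => hF.right_notMem (h ▸ hv)
  by_cases h1 : x ∉ H ∧ y ∉ H
  · exact ⟨F ∩ H, Set.inter_subset_left, fun h => hH.left_notMem h.2, v, w,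
      subfragment_of_same_side hA hF hv hH h1.1 h1.2⟩
  by_cases hx : x ∈ H
  · by_cases hy : y ∈ H ∨ y = w
    · exact ⟨F ∩ _, Set.inter_subset_left, fun h => hH.compl.left_notMem h.2, v, w,
        subfragment_of_same_side hA hF hv hH.compl (fun h => h.1 hx)
          (fun h => hy.elim h.1 h.2.2)⟩
    · rw [not_or] at hy
      exact exists_subfragment_of_opposite_sides hA hF hv hu huv hH hx ⟨hy.1, hyv, hy.2⟩
  · have hy : y ∈ H := by tauto
    by_cases hxw : x = w
    · exact ⟨F ∩ _, Set.inter_subset_left, fun h => hH.compl.left_notMem h.2, v, w,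
        subfragment_of_same_side hA hF hv hH.compl (fun h => h.2.2 hxw) (fun h => h.1 hy)⟩
    · exact exists_subfragment_of_opposite_sides hA hF.symm hv hu huv hH hy ⟨hx, hxv, hxw⟩

/-! ### Vertices of degree 2 in fragments -/

lemma Fragment.degree_two (hA : NoCutVertex G) {F : Set V} {x y v : V} (hF : Fragment G F x y)
    (hv : v ∈ F) (hall : ∀ u ∈ F, u = v) : (G.neighborSet v).ncard = 2 := by
  obtain ⟨a, ha, hxa⟩ := hF.exists_adj hA
  obtain ⟨b, hb, hyb⟩ := hF.symm.exists_adj hA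
  obtain rfl := hall a ha
  obtain rfl := hall b hb
  have : G.neighborSet b = {x, y} := by
    ext c
    simp only [SimpleGraph.mem_neighborSet, Set.mem_insert_iff, Set.mem_singleton_iff]
    constructor
    · intro h
      rcases hF.closed b hb c h with h' | h'
      · exact absurd (hall c h') h.ne'
      · exact h'
    · rintro (rfl | rfl)
      · exact hxa.symm
      · exact hyb.symm
  rw [this, Set.ncard_pair hF.ne]

lemma Fragment.exists_degree_two [Finite V] (hA : NoCutVertex G) (hB : AllInCut G) {F : Set V}
    {x y : V} (hF : Fragment G F x y) : ∃ v ∈ F, (G.neighborSet v).ncard = 2 := by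
  induction hn : F.ncard using Nat.strong_induction_on generalizing F x y with
  | _ n ih =>
    obtain ⟨v, hv⟩ := hF.nonempty
    by_cases hall : ∀ u ∈ F, u = v
    · exact ⟨v, hv, hF.degree_two hA hv hall⟩
    · push Not at hall
      obtain ⟨u, hu, huv⟩ := hall
      obtain ⟨F', hsub, hvF', x', y', hF'⟩ := exists_subfragment hA hB hF hv hu huv
      have hlt : F'.ncard < n := hn ▸ Set.ncard_lt_ncard ⟨hsub, fun h => hvF' (h hv)⟩
      obtain ⟨d, hd, hd2⟩ := ih _ hlt hF' rfl
      exact ⟨d, hsub hd, hd2⟩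

lemma Fragment.exists_two_degree_two [Finite V] (hA : NoCutVertex G) (hB : AllInCut G) {F : Set V}
    {x y u v : V} (hF : Fragment G F x y) (hu : u ∈ F) (hv : v ∈ F) (huv : u ≠ v) :
    ∃ a ∈ F, ∃ b ∈ F, a ≠ b ∧ (G.neighborSet a).ncard = 2 ∧ (G.neighborSet b).ncard = 2 := by
  obtain ⟨a, ha, ha2⟩ := hF.exists_degree_two hA hB
  obtain ⟨c, hc, hca⟩ : ∃ c ∈ F, c ≠ a := by
    by_cases h : u = a
    · exact ⟨v, hv, fun h' => huv (h.trans h'.symm)⟩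
    · exact ⟨u, hu, h⟩
  obtain ⟨F', hsub, haF', x', y', hF'⟩ := exists_subfragment hA hB hF ha hc hca
  obtain ⟨b, hb, hb2⟩ := hF'.exists_degree_two hA hB
  exact ⟨a, ha, b, hsub hb, fun h => haF' (h ▸ hb), ha2, hb2⟩

/-! ### Counting vertices of degree 2 -/

lemma four_le_ncard [Finite V] {S : Set V} {a b c d : V} (ha : a ∈ S) (hb : b ∈ S) (hc : c ∈ S)
    (hd : d ∈ S) (hab : a ≠ b) (hac : a ≠ c) (had : a ≠ d) (hbc : b ≠ c) (hbd : b ≠ d)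
    (hcd : c ≠ d) : 4 ≤ S.ncard := by
  have hsub : ({a, b, c, d} : Set V) ⊆ S := by
    rintro z (rfl | rfl | rfl | rfl) <;> assumption
  have hcard : ({a, b, c, d} : Set V).ncard = 4 := by
    rw [Set.ncard_insert_of_notMem (by simp [*]), Set.ncard_insert_of_notMem (by simp [*]),
      Set.ncard_pair hcd]
  exact hcard ▸ Set.ncard_le_ncard hsub

/-- The case in which one side of the separating pair `{a, w}` has at least two points. -/
lemma four_of_two_le_side [Finite V] (hA : NoCutVertex G) (hB : AllInCut G) {H K : Set V}
    {a w u v : V} (ha : (G.neighborSet a).ncard = 2) (hH : Fragment G H a w)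
    (hK : Fragment G K a w) (hdisj : ∀ z ∈ H, z ∉ K) (hu : u ∈ H) (hv : v ∈ H) (huv : u ≠ v) :
    4 ≤ {v : V | (G.neighborSet v).ncard = 2}.ncard := by
  obtain ⟨b, hb, c, hc, hbc, hb2, hc2⟩ := hH.exists_two_degree_two hA hB hu hv huv
  obtain ⟨d, hd, hd2⟩ := hK.exists_degree_two hA hB
  refine four_le_ncard (a := a) (b := b) (c := c) (d := d) ha hb2 hc2 hd2 ?_ ?_ ?_ hbc ?_ ?_
  · rintro rfl; exact hH.left_notMem hb
  · rintro rfl; exact hH.left_notMem hc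
  · rintro rfl; exact hK.left_notMem hd
  · rintro rfl; exact hdisj _ hb hd
  · rintro rfl; exact hdisj _ hc hd

/-- The case in which both sides `{p}` and `{q}` of the separating pair `{a, w}` are single points.
As `a` has degree 2, it is not adjacent to `w`, and so `w` also has degree 2. -/
lemma four_of_singleton_sides [Finite V] (hA : NoCutVertex G) {H : Set V} {a w p q : V}
    (ha : (G.neighborSet a).ncard = 2) (hH : Fragment G H a w) (hp : p ∈ H)
    (hpH : ∀ u ∈ H, u = p) (hq : q ∉ H ∧ q ≠ a ∧ q ≠ w)
    (hqH : ∀ u, u ∉ H ∧ u ≠ a ∧ u ≠ w → u = q) :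
    4 ≤ {v : V | (G.neighborSet v).ncard = 2}.ncard := by
  have hp2 := hH.degree_two hA hp hpH
  have hq2 := hH.compl.degree_two hA hq hqH
  have hpa : p ≠ a := fun h => hH.left_notMem (h ▸ hp)
  have hpw : p ≠ w := fun h => hH.right_notMem (h ▸ hp)
  have hpq : p ≠ q := fun h => hq.1 (h ▸ hp)
  have hap : G.Adj a p := by
    obtain ⟨u, hu, h⟩ := hH.exists_adj hA
    exact hpH u hu ▸ h
  have haq : G.Adj a q := by
    obtain ⟨u, hu, h⟩ := hH.compl.exists_adj hA
    exact hqH u hu ▸ h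
  have haw : ¬ G.Adj a w := by
    intro haw
    have hsub : ({p, q, w} : Set V) ⊆ G.neighborSet a := by
      rintro z (rfl | rfl | rfl) <;> assumption
    have h3 : ({p, q, w} : Set V).ncard = 3 := by
      rw [Set.ncard_insert_of_notMem (by simp [*]), Set.ncard_pair hq.2.2]
    have := Set.ncard_le_ncard hsub
    omega
  have hw : Fragment G {w} p q := by
    refine ⟨hpq, hpw, hq.2.2, ⟨w, rfl⟩, ⟨a, hH.ne, hpa.symm, hq.2.1.symm⟩, ?_⟩
    rintro _ rfl v huv
    by_cases hvH : v ∈ H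
    · exact Or.inr (Or.inl (hpH v hvH))
    · refine Or.inr (Or.inr (hqH v ⟨hvH, ?_, huv.ne'⟩))
      rintro rfl
      exact haw huv.symm
  have hw2 := hw.degree_two hA rfl (fun u hu => hu)
  exact four_le_ncard (a := a) (b := w) (c := p) (d := q) ha hw2 hp2 hq2 hH.ne hpa.symm
    hq.2.1.symm hpw.symm hq.2.2.symm hpq

end

/-- In a finite simple 2-connected graph `G` on at least 4 vertices, either
some vertex can be subtracted leaving a 2-connected graph, or `G` has at
least four vertices of degree exactly 2. -/
theorem subtractable_or_four_degree_two {V : Type*} [Fintype V]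
    (G : SimpleGraph V)
    (hcard : 4 ≤ Fintype.card V) (hG : TwoConnected G) :
    (∃ v : V, TwoConnected (G.induce ({v}ᶜ : Set V))) ∨
      4 ≤ {v : V | (G.neighborSet v).ncard = 2}.ncard := by
  by_cases h : ∃ v : V, TwoConnected (G.induce ({v}ᶜ : Set V))
  · exact Or.inl h
  refine Or.inr ?_
  have hA := hG.noCutVertex
  have hB := allInCut hcard hG h
  obtain ⟨v₀⟩ := hG.1.nonempty
  obtain ⟨w₀, F, hF⟩ := hB v₀
  obtain ⟨a, -, ha⟩ := hF.exists_degree_two hA hB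
  obtain ⟨w, H, hH⟩ := hB a
  obtain ⟨p, hp⟩ := hH.nonempty
  obtain ⟨q, hq⟩ := hH.compl.nonempty
  by_cases hpH : ∀ u ∈ H, u = p
  · by_cases hqH : ∀ u ∈ {z | z ∉ H ∧ z ≠ a ∧ z ≠ w}, u = q
    · exact four_of_singleton_sides hA ha hH hp hpH hq hqH
    · push Not at hqH
      obtain ⟨u, hu, huq⟩ := hqH
      exact four_of_two_le_side hA hB ha hH.compl hH (fun z hz => hz.1) hu hq huq
  · push Not at hpH
    obtain ⟨u, hu, hup⟩ := hpH
    exact four_of_two_le_side hA hB ha hH hH.compl (fun z hz hz' => hz'.1 hz) hu hp hup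
end

section
/- Let G be a finite simple 2-connected graph with at least 3 vertices and let H be a subgraph of G with at least two vertices such that V(G) \ V(H) is non-empty. Then there exist a vertex v ∈ V(G) \ V(H) and two paths γ₁ and γ₂ in G from v to H such that γ₁ and γ₂ share no vertex other than v, and each γᵢ meets V(H) in exactly one vertex (its endpoint other than v). -/
/-- A walk ending in `S` can be cut at its first vertex in `S` and shortened to a path. -/
theorem SimpleGraph.Walk.exists_isPath_first_mem {V : Type*} {G : SimpleGraph V} (S : Set V)
    {u w : V} (p : G.Walk u w) (hw : w ∈ S) :
    ∃ w' ∈ S, ∃ q : G.Walk u w', q.IsPath ∧ q.support ⊆ p.support ∧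
      ∀ x ∈ q.support, x ∈ S → x = w' := by
  classical
  induction p with
  | nil => exact ⟨_, hw, .nil, by simp⟩
  | @cons a b c h p ih =>
    by_cases ha : a ∈ S
    · exact ⟨a, ha, .nil, by simp⟩
    · obtain ⟨w', hw', q, -, hqp, hqS⟩ := ih hw
      refine ⟨w', hw', (Walk.cons h q).bypass, Walk.bypass_isPath _, ?_, ?_⟩
      · refine List.Subset.trans (Walk.support_bypass_subset_support _) ?_
        simpa only [Walk.support_cons] using List.cons_subset_cons a hqp
      · intro x hx hxS
        have hx' := Walk.support_bypass_subset_support _ hx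
        rw [Walk.support_cons, List.mem_cons] at hx'
        rcases hx' with rfl | hx'
        · exact absurd hxS ha
        · exact hqS x hx' hxS

/-- If `G` is a finite simple 2-connected graph on at least 3 vertices and
`H` is a vertex-proper subgraph of `G` with at least two vertices, then there
is a vertex `v` outside `H` and two paths `γ₁`, `γ₂` in `G` from `v` to `H`
sharing no vertex other than `v`, each meeting `H` only in its endpoint. -/
theorem exists_two_disjoint_paths_to_subgraph {V : Type*} [Fintype V]
    (G : SimpleGraph V) (H : G.Subgraph)
    (hcard : 3 ≤ Fintype.card V) (hG : TwoConnected G)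
    (hH : 2 ≤ H.verts.ncard) (hproper : (H.vertsᶜ : Set V).Nonempty) :
    ∃ v : V, v ∉ H.verts ∧
      ∃ (w₁ w₂ : V), w₁ ∈ H.verts ∧ w₂ ∈ H.verts ∧
        ∃ (γ₁ : G.Walk v w₁) (γ₂ : G.Walk v w₂),
          γ₁.IsPath ∧ γ₂.IsPath ∧
          (∀ x, x ∈ γ₁.support → x ∈ γ₂.support → x = v) ∧
          (∀ x ∈ γ₁.support, x ∈ H.verts → x = w₁) ∧
          (∀ x ∈ γ₂.support, x ∈ H.verts → x = w₂) := by
  obtain ⟨a, ha⟩ := hproper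
  obtain ⟨b, hb, c, hc, hbc⟩ := (Set.one_lt_ncard (Set.toFinite _)).1 hH
  obtain ⟨p⟩ := hG.1.preconnected a b
  obtain ⟨d, -, hv, hw⟩ := p.exists_boundary_dart H.vertsᶜ ha (by simpa using hb)
  obtain ⟨⟨v, w⟩, hvw⟩ := d
  simp only [Set.mem_compl_iff, not_not] at hv hw hvw
  have hne : v ≠ w := hvw.ne
  obtain ⟨t, ht, htw⟩ : ∃ t ∈ H.verts, t ≠ w := by
    by_cases h : b = w
    · exact ⟨c, hc, fun h' => hbc (h.trans h'.symm)⟩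
    · exact ⟨b, hb, h⟩
  obtain ⟨r⟩ := (hG.2 w).preconnected ⟨v, hne⟩ ⟨t, htw⟩
  obtain ⟨w', hw', q, hq, hqr, hqH⟩ :=
    (r.map (SimpleGraph.Embedding.induce ({w}ᶜ : Set V)).toHom).exists_isPath_first_mem
      H.verts ht
  have hwq : w ∉ q.support := by
    intro h
    have h' := hqr h
    rw [SimpleGraph.Walk.support_map, List.mem_map] at h'
    obtain ⟨y, -, hy⟩ := h'
    exact y.2 hy
  refine ⟨v, hv, w, w', hw, hw', hvw.toWalk, q, ?_, hq, ?_, ?_, hqH⟩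
  · simp [hne]
  · intro x hx hxq
    simp only [SimpleGraph.Walk.support_cons, SimpleGraph.Walk.support_nil, List.mem_cons,
      List.not_mem_nil, or_false] at hx
    rcases hx with rfl | rfl
    · rfl
    · exact absurd hxq hwq
  · intro x hx hxH
    simp only [SimpleGraph.Walk.support_cons, SimpleGraph.Walk.support_nil, List.mem_cons,
      List.not_mem_nil, or_false] at hx
    rcases hx with rfl | rfl
    · exact absurd hxH hv
    · rfl
end

section
/- Let G be a finite simple 2-connected graph with at least 3 vertices. Then either G has a vertex of degree exactly 2, or there exists an edge e of G such that the graph G − e obtained by deleting e (keeping all vertices) is 2-connected. -/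
/-- `v` is not a cut vertex of `G`: a nonempty set of vertices avoiding `v` that no edge of `G`
leaves, except towards `v`, contains every vertex other than `v`. -/
def NoCut {V : Type*} (G : SimpleGraph V) (v : V) : Prop :=
  ∀ S : Set V, S.Nonempty → v ∉ S → (∀ a ∈ S, ∀ b, G.Adj a b → b ∈ S ∨ b = v) →
    ∀ b, b ≠ v → b ∈ S

/-- The partition `A ⊔ {v} ⊔ B` of the vertices, where `B` is the complement of `A ∪ {v}`, has
`x ∈ A` and `y ∈ B`, and `xy` is the only edge between `A` and `B`. -/
structure IsSplit {V : Type*} (G : SimpleGraph V) (A : Set V) (v x y : V) : Prop where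
  left_mem : x ∈ A
  right_notMem : y ∉ A
  right_ne : y ≠ v
  cut_notMem : v ∉ A
  adj : G.Adj x y
  only : ∀ a ∈ A, ∀ b, b ∉ A → b ≠ v → G.Adj a b → a = x ∧ b = y

lemma noCut_of_connected {V : Type*} {G : SimpleGraph V} {v : V}
    (h : (G.induce ({v}ᶜ : Set V)).Connected) : NoCut G v := by
  intro S ⟨s, hs⟩ hv hS b hb
  have hsv : s ≠ v := fun h => hv (h ▸ hs)
  obtain ⟨p⟩ := h.preconnected ⟨s, hsv⟩ ⟨b, hb⟩
  have key : ∀ (u t : ({v}ᶜ : Set V)), (G.induce ({v}ᶜ : Set V)).Walk u t →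
      (u : V) ∈ S → (t : V) ∈ S := by
    intro u t p
    induction p with
    | nil => exact id
    | cons hadj _ ih =>
      rename_i u' t' w' _
      intro hu
      refine ih ((hS _ hu t' hadj).resolve_right t'.2)
  exact key _ _ p hs

lemma connected_of_noCut {V : Type*} {G : SimpleGraph V} {v : V} (hne : ∃ u, u ≠ v)
    (h : NoCut G v) : (G.induce ({v}ᶜ : Set V)).Connected := by
  obtain ⟨u₀, hu₀⟩ := hne
  have : Nonempty ({v}ᶜ : Set V) := ⟨⟨u₀, hu₀⟩⟩
  refine ⟨fun s t => ?_⟩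
  obtain ⟨ht', ht⟩ := h {b | ∃ hb : b ≠ v, (G.induce ({v}ᶜ : Set V)).Reachable s ⟨b, hb⟩}
    ⟨s, s.2, .rfl⟩ (fun hv => hv.1 rfl) (by
      rintro a ⟨ha, hsa⟩ b hab
      by_cases hb : b = v
      · exact .inr hb
      · have hadj : (G.induce ({v}ᶜ : Set V)).Adj ⟨a, ha⟩ ⟨b, hb⟩ := hab
        exact .inl ⟨hb, hsa.trans hadj.reachable⟩) t t.2
  exact ht

lemma exists_ne_ne {V : Type*} [Fintype V] (hcard : 3 ≤ Fintype.card V) (a b : V) :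
    ∃ c, c ≠ a ∧ c ≠ b := by
  classical
  by_contra! h
  have h1 : (Finset.univ : Finset V) ⊆ {a, b} := by
    intro c _
    simp only [Finset.mem_insert, Finset.mem_singleton]
    by_cases hc : c = a
    · exact .inl hc
    · exact .inr (h c hc)
  have := Finset.card_le_card h1
  have := Finset.card_le_two (a := a) (b := b)
  rw [Finset.card_univ] at *
  omega

/-- With at least three vertices, connectedness itself follows from the absence of cut vertices:
two vertices are joined within the graph minus a third. -/
lemma twoConnected_of_noCut {V : Type*} [Fintype V] {G : SimpleGraph V}
    (hcard : 3 ≤ Fintype.card V) (h : ∀ v, NoCut G v) : TwoConnected G := by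
  have hc : ∀ v, (G.induce ({v}ᶜ : Set V)).Connected := fun v =>
    connected_of_noCut ((exists_ne_ne hcard v v).imp fun _ h => h.1) (h v)
  have : Nonempty V := Fintype.card_pos_iff.1 (by omega)
  refine ⟨⟨fun a b => ?_⟩, hc⟩
  obtain ⟨c, hca, hcb⟩ := exists_ne_ne hcard a b
  exact ((hc c).preconnected ⟨a, hca.symm⟩ ⟨b, hcb.symm⟩).map
    (SimpleGraph.Embedding.induce ({c}ᶜ : Set V)).toHom

lemma IsSplit.symm {V : Type*} {G : SimpleGraph V} {A : Set V} {v x y : V}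
    (h : IsSplit G A v x y) : IsSplit G {b | b ∉ A ∧ b ≠ v} v y x := by
  obtain ⟨h1, h2, h3, h4, h5, h6⟩ := h
  refine ⟨⟨h2, h3⟩, fun h => h.1 h1, fun h => h4 (h ▸ h1), fun h => h.2 rfl, h5.symm, ?_⟩
  rintro a ⟨ha, hav⟩ b hb hbv hab
  have hbA : b ∈ A := by
    by_contra hbA
    exact hb ⟨hbA, hbv⟩
  exact (h6 b hbA a ha hav hab.symm).symm

lemma exists_isSplit {V : Type*} [Fintype V] {G : SimpleGraph V} (hcard : 3 ≤ Fintype.card V)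
    (hG : ∀ v, NoCut G v) {x y : V} (hxy : G.Adj x y)
    (hdel : ¬ TwoConnected (G.deleteEdges {s(x, y)})) : ∃ A v, IsSplit G A v x y := by
  obtain ⟨v, hv⟩ : ∃ v, ¬ NoCut (G.deleteEdges {s(x, y)}) v := by
    by_contra! h
    exact hdel (twoConnected_of_noCut hcard h)
  simp only [NoCut] at hv
  push Not at hv
  obtain ⟨S, hne, hvS, hS, b₀, hb₀, hb₀S⟩ := hv
  -- `S` is closed in `(G - xy) - v` but not in `G - v`, so `xy` is the only edge of `G - v`
  -- leaving it.
  have hcross : ∀ a ∈ S, ∀ b, b ∉ S → b ≠ v → G.Adj a b → s(a, b) = s(x, y) := by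
    intro a ha b hb hbv hab
    by_contra hne
    rcases hS a ha b (by simp only [SimpleGraph.deleteEdges_adj]; exact ⟨hab, hne⟩) with h | h
    · exact hb h
    · exact hbv h
  obtain ⟨a, ha, b, hab, hb, hbv⟩ : ∃ a ∈ S, ∃ b, G.Adj a b ∧ b ∉ S ∧ b ≠ v := by
    by_contra! h
    refine hb₀S (hG v S hne hvS (fun a ha b hab => ?_) b₀ hb₀)
    by_cases hb : b ∈ S
    · exact .inl hb
    · exact .inr (h a ha b hab hb)
  have hsplit : IsSplit G S v a b := by
    refine ⟨ha, hb, hbv, hvS, hab, fun a' ha' b' hb' hbv' hab' => ?_⟩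
    have h := (hcross a' ha' b' hb' hbv' hab').trans (hcross a ha b hb hbv hab).symm
    rcases Sym2.eq_iff.1 h with h | h
    · exact h
    · exact absurd (h.1 ▸ ha') hb
  rcases Sym2.eq_iff.1 (hcross a ha b hb hbv hab) with ⟨rfl, rfl⟩ | ⟨rfl, rfl⟩
  · exact ⟨S, v, hsplit⟩
  · exact ⟨_, v, hsplit.symm⟩

/-- The descent step: a split of `xy` and a split of a suitable edge `xz` inside its first side
uncross to a split with strictly smaller first side. -/
lemma exists_smaller {V : Type*} {G : SimpleGraph V} (hG : ∀ v, NoCut G v)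
    (hdeg : ∀ v, (G.neighborSet v).ncard ≠ 2)
    (hsplit : ∀ x y, G.Adj x y → ∃ A v, IsSplit G A v x y)
    {A : Set V} {v x y : V} (h : IsSplit G A v x y) :
    ∃ A' v' x' y', IsSplit G A' v' x' y' ∧ A' ⊂ A := by
  obtain ⟨hxA, hyA, hyv, hvA, hxy, hA⟩ := h
  have hxv : x ≠ v := fun h => hvA (h ▸ hxA)
  obtain ⟨z, hzA, hxz⟩ : ∃ z ∈ A, G.Adj x z := by
    by_contra! hno
    have hN : ∀ b, G.Adj x b → b = y ∨ b = v := by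
      intro b hb
      by_cases hbv : b = v
      · exact .inr hbv
      · exact .inl (hA x hxA b (fun hbA => hno b hbA hb) hbv hb).2
    by_cases hadj : G.Adj x v
    · refine hdeg x ?_
      have : G.neighborSet x = {y, v} := by
        ext b
        simp only [SimpleGraph.mem_neighborSet, Set.mem_insert_iff, Set.mem_singleton_iff]
        exact ⟨hN b, by rintro (rfl | rfl) <;> assumption⟩
      rw [this, Set.ncard_pair hyv]
    · -- Here `y` is the only neighbour of `x`, hence separates `x` from `v`.
      have := hG y {x} ⟨x, rfl⟩ (fun h => hyA (h ▸ hxA)) (by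
        rintro a rfl b hab
        rcases hN b hab with h | h
        · exact .inr h
        · exact absurd (h ▸ hab) hadj) v hyv.symm
      exact hxv this.symm
  obtain ⟨C, w, hC⟩ := hsplit x z hxz
  have hD := hC.symm
  obtain ⟨hxC, hzC, hzw, hwC, -, hCD⟩ := hC
  have hxw : x ≠ w := fun h => hwC (h ▸ hxC)
  have hzv : z ≠ v := fun h => hvA (h ▸ hzA)
  have hzy : z ≠ y := fun h => hyA (h ▸ hzA)
  have hxne : x ≠ z := hxz.ne
  have hyx : y ≠ x := hxy.ne'
  by_cases hwB : w ∉ A ∧ w ≠ v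
  · exfalso
    by_cases hvC : v ∈ C
    · -- The only edge leaving `A ∩ D` is `xz`.
      have := hG x {a | a ∈ A ∧ a ∉ C} ⟨z, hzA, hzC⟩ (fun h => h.2 hxC) (by
        rintro a ⟨haA, haC⟩ b hab
        have haw : a ≠ w := fun h => hwB.1 (h ▸ haA)
        have h1 := hA a haA b
        have h2 := fun hb => hCD b hb a haC haw hab.symm
        simp only [Set.mem_ofPred_eq]
        clear hA hCD hG hdeg hsplit hD
        by_cases hbv : b = v <;> by_cases hbw : b = w <;> grind) y hyx
      exact hyA this.1
    · -- The only edges leaving `A ∩ C` are `xz` and `xy`.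
      have hAC : ∀ a, a ∈ A → a ∈ C → a = x := by
        intro a haA haC
        by_contra hax
        have := hG x {a | a ∈ A ∧ a ∈ C ∧ a ≠ x} ⟨a, haA, haC, hax⟩ (fun h => h.2.2 rfl) (by
          rintro a ⟨haA, haC, hax⟩ b hab
          have h1 := hA a haA b
          have h2 := hCD a haC b
          simp only [Set.mem_ofPred_eq]
          clear hA hCD hG hdeg hsplit hD
          by_cases hbv : b = v <;> by_cases hbw : b = w <;> grind) y hyx
        exact hyA this.1
      refine hdeg x ?_
      have : G.neighborSet x = {y, z} := by
        ext b
        simp only [SimpleGraph.mem_neighborSet, Set.mem_insert_iff, Set.mem_singleton_iff]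
        refine ⟨fun hb => ?_, by rintro (rfl | rfl) <;> assumption⟩
        have h1 := hA x hxA b
        have h2 := hCD x hxC b
        have h3 := hAC b
        have h4 := hb.ne
        clear hA hCD hG hdeg hsplit hD
        by_cases hbv : b = v <;> by_cases hbw : b = w <;> grind
      rw [this, Set.ncard_pair hzy.symm]
  · have hyw : y ≠ w := by grind
    have hyC : y ∈ C := by
      by_contra hyC
      exact hzy (hCD x hxC y hyC hyw hxy).2.symm
    -- No edge leaves `D ∩ B` except towards `v`.
    have hDB : ∀ b, b ∉ C → b ≠ w → b ∉ A → b = v := by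
      intro b hbC hbw hbA
      by_contra hbv
      have := hG v {b | b ∉ C ∧ b ≠ w ∧ b ∉ A ∧ b ≠ v} ⟨b, hbC, hbw, hbA, hbv⟩
        (fun h => h.2.2.2 rfl) (by
          rintro a ⟨haC, haw, haA, hav⟩ b hab
          have h1 := fun hb => hA b hb a haA hav hab.symm
          have h2 := fun hb => hCD b hb a haC haw hab.symm
          simp only [Set.mem_ofPred_eq]
          clear hA hCD hG hdeg hsplit hD
          by_cases hbv : b = v <;> by_cases hbw : b = w <;> grind) z hzv
      exact this.2.2.1 hzA
    have hvD : v ∉ C → v = w := by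
      intro hvC
      by_contra hvw
      -- No edge leaves `B ⊆ C` except towards `x`.
      have := hG x {b | b ∉ A ∧ b ≠ v} ⟨y, hyA, hyv⟩ (fun h => h.1 hxA) (by
          rintro a ⟨haA, hav⟩ b hab
          have h1 := fun hb => hA b hb a haA hav hab.symm
          have h2 := fun ha hb hbw => hCD a ha b hb hbw hab
          have h3 := hDB a
          simp only [Set.mem_ofPred_eq]
          clear hA hCD hG hdeg hsplit hD
          by_cases hbv : b = v <;> by_cases hbw : b = w <;> grind) z hxne.symm
      exact this.1 hzA
    refine ⟨_, _, _, _, hD, ?_, fun hsub => (hsub hxA).1 hxC⟩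
    rintro b ⟨hbC, hbw⟩
    by_contra hbA
    have hbv := hDB b hbC hbw hbA
    exact hbw (hbv.trans (hvD (hbv ▸ hbC)))

/-- Every finite simple 2-connected graph on at least 3 vertices either has a
vertex of degree exactly 2, or has an edge whose deletion (keeping all
vertices) leaves a 2-connected graph. -/
theorem degreeTwo_or_removable_edge {V : Type*} [Fintype V]
    (G : SimpleGraph V)
    (hcard : 3 ≤ Fintype.card V) (hG : TwoConnected G) :
    (∃ v : V, (G.neighborSet v).ncard = 2) ∨
      ∃ e ∈ G.edgeSet, TwoConnected (G.deleteEdges {e}) := by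
  by_contra! hcon
  obtain ⟨hdeg, hdel⟩ := hcon
  have hcut : ∀ v, NoCut G v := fun v => noCut_of_connected (hG.2 v)
  have hsplit : ∀ x y, G.Adj x y → ∃ A v, IsSplit G A v x y := fun x y hxy =>
    exists_isSplit hcard hcut hxy (hdel s(x, y) hxy)
  have hdescent : ∀ (n : ℕ) (A : Set V) (v x y : V), A.ncard = n → ¬ IsSplit G A v x y := by
    intro n
    induction n using Nat.strong_induction_on with
    | _ n ih =>
      intro A v x y hn h
      obtain ⟨A', v', x', y', h', hlt⟩ := exists_smaller hcut hdeg hsplit h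
      exact ih _ (hn ▸ Set.ncard_lt_ncard hlt A.toFinite) A' v' x' y' rfl h'
  have : Nontrivial V := Fintype.one_lt_card_iff_nontrivial.1 (by omega)
  obtain ⟨x⟩ := hG.1.nonempty
  obtain ⟨y, hxy⟩ := hG.1.preconnected.exists_adj_of_nontrivial x
  obtain ⟨A, v, h⟩ := hsplit x y hxy
  exact hdescent _ A v x y rfl h
end

section
/- For every natural number N there exists a finite simple 2-connected graph G with more than N vertices such that exactly four vertices of G have degree 2 and, for every vertex v of G, the induced subgraph of G on V(G) \ {v} is not 2-connected. -/
/-- The ladder with `n` rungs: `(i, b)` is the end of the `i`-th rung on side `b`. -/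
def ladder (n : ℕ) : SimpleGraph (Fin n × Bool) where
  Adj p q := (p.1 = q.1 ∧ p.2 ≠ q.2) ∨
    (p.2 = q.2 ∧ (p.1.val + 1 = q.1.val ∨ q.1.val + 1 = p.1.val))
  symm := ⟨by
    rintro p q (⟨h, h'⟩ | ⟨h, h'⟩)
    · exact Or.inl ⟨h.symm, h'.symm⟩
    · exact Or.inr ⟨h.symm, h'.symm⟩⟩
  loopless := ⟨by
    rintro p (⟨_, h⟩ | ⟨_, h⟩)
    · exact h rfl
    · omega⟩

lemma ladder_adj {n : ℕ} {p q : Fin n × Bool} :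
    (ladder n).Adj p q ↔ (p.1 = q.1 ∧ p.2 ≠ q.2) ∨
      (p.2 = q.2 ∧ (p.1.val + 1 = q.1.val ∨ q.1.val + 1 = p.1.val)) := Iff.rfl

/-- Any vertex set containing a whole side of the ladder induces a connected subgraph. -/
lemma ladder_induce_connected {n : ℕ} (hn : 0 < n) (S : Set (Fin n × Bool)) (c : Bool)
    (hS : ∀ i, (i, c) ∈ S) : ((ladder n).induce S).Connected := by
  have side : ∀ (k : ℕ) (hk : k < n),
      ((ladder n).induce S).Reachable ⟨(⟨k, hk⟩, c), hS _⟩ ⟨(⟨0, hn⟩, c), hS _⟩ := by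
    intro k
    induction k with
    | zero => intro _; exact SimpleGraph.Reachable.refl _
    | succ k ih =>
      intro hk
      refine SimpleGraph.Reachable.trans (SimpleGraph.Adj.reachable ?_) (ih (by omega))
      exact Or.inr ⟨rfl, Or.inr rfl⟩
  have all : ∀ x : S, ((ladder n).induce S).Reachable x ⟨(⟨0, hn⟩, c), hS _⟩ := by
    rintro ⟨⟨i, d⟩, hx⟩
    by_cases hd : d = c
    · subst hd
      exact side i.1 i.2
    · refine SimpleGraph.Reachable.trans (SimpleGraph.Adj.reachable ?_) (side i.1 i.2)
      exact Or.inl ⟨rfl, hd⟩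
  have : Nonempty S := ⟨⟨(⟨0, hn⟩, c), hS _⟩⟩
  exact SimpleGraph.Connected.mk fun x y => (all x).trans (all y).symm

lemma ladder_twoConnected {n : ℕ} (hn : 0 < n) : TwoConnected (ladder n) := by
  constructor
  · exact (SimpleGraph.induceUnivIso (ladder n)).connected_iff.1
      (ladder_induce_connected hn Set.univ true fun _ => Set.mem_univ _)
  · rintro ⟨a, b⟩
    refine ladder_induce_connected hn _ (!b) fun i => ?_
    simp

/-- If a vertex set `P` is closed under adjacency away from `v` and `w`, and both `P` and its
complement contain a vertex other than `v` and `w`, then `G - v` is not 2-connected. -/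
lemma not_twoConnected_of_separation {V : Type*} (G : SimpleGraph V) (v w x y : V) (P : V → Prop)
    (hw : w ≠ v) (hxv : x ≠ v) (hxw : x ≠ w) (hyv : y ≠ v) (hyw : y ≠ w)
    (hx : P x) (hy : ¬ P y)
    (hP : ∀ a b, a ≠ v → a ≠ w → b ≠ v → b ≠ w → G.Adj a b → P a → P b) :
    ¬ TwoConnected (G.induce ({v}ᶜ : Set V)) := by
  rintro ⟨-, h⟩
  have hc := h ⟨w, hw⟩
  have key : ∀ a b, ((G.induce ({v}ᶜ : Set V)).induce ({⟨w, hw⟩}ᶜ)).Walk a b →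
      P a.1.1 → P b.1.1 := by
    intro a b p
    induction p with
    | nil => exact id
    | @cons a b c hab _ ih =>
      intro ha
      exact ih (hP a.1.1 b.1.1 a.1.2 (fun e => a.2 (Subtype.ext e)) b.1.2
        (fun e => b.2 (Subtype.ext e)) hab ha)
  obtain ⟨p⟩ := hc.preconnected ⟨⟨x, hxv⟩, fun e => hxw (congrArg Subtype.val e)⟩
    ⟨⟨y, hyv⟩, fun e => hyw (congrArg Subtype.val e)⟩
  exact hy (key _ _ p hx)

lemma ladder_not_twoConnected {n : ℕ} (hn : 3 ≤ n) (v : Fin n × Bool) :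
    ¬ TwoConnected ((ladder n).induce ({v}ᶜ : Set (Fin n × Bool))) := by
  obtain ⟨⟨a, ha⟩, b⟩ := v
  by_cases h0 : a = 0
  · refine not_twoConnected_of_separation _ _ (⟨1, by omega⟩, !b) (⟨0, by omega⟩, !b)
      (⟨1, by omega⟩, b) (fun p => p = (⟨0, by omega⟩, !b)) ?_ ?_ ?_ ?_ ?_ ?_ ?_ ?_
    on_goal 8 =>
      rintro ⟨⟨i, hi⟩, c⟩ ⟨⟨j, hj⟩, d⟩
      cases b <;> cases c <;> cases d <;> simp [ladder_adj] <;> omega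
    all_goals simp [h0]
  by_cases h1 : a + 1 = n
  · refine not_twoConnected_of_separation _ _ (⟨a - 1, by omega⟩, !b) (⟨a, ha⟩, !b)
      (⟨a - 1, by omega⟩, b) (fun p => p = (⟨a, ha⟩, !b)) ?_ ?_ ?_ ?_ ?_ ?_ ?_ ?_
    on_goal 8 =>
      rintro ⟨⟨i, hi⟩, c⟩ ⟨⟨j, hj⟩, d⟩
      cases b <;> cases c <;> cases d <;> simp [ladder_adj] <;> omega
    all_goals simp
    all_goals omega
  · refine not_twoConnected_of_separation _ _ (⟨a, ha⟩, !b) (⟨0, by omega⟩, b)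
      (⟨a + 1, by omega⟩, b) (fun p => p.1.val < a) ?_ ?_ ?_ ?_ ?_ ?_ ?_ ?_
    on_goal 8 =>
      rintro ⟨⟨i, hi⟩, c⟩ ⟨⟨j, hj⟩, d⟩
      cases b <;> cases c <;> cases d <;> simp [ladder_adj] <;> omega
    all_goals simp
    all_goals omega

lemma ladder_degree_two_iff {n : ℕ} (hn : 3 ≤ n) (v : Fin n × Bool) :
    ((ladder n).neighborSet v).ncard = 2 ↔ v.1.val = 0 ∨ v.1.val + 1 = n := by
  obtain ⟨⟨a, ha⟩, b⟩ := v
  constructor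
  · intro h
    by_contra hcon
    simp only [not_or] at hcon
    obtain ⟨h0, h1⟩ := hcon
    have hsub : ({(⟨a, ha⟩, !b), (⟨a - 1, by omega⟩, b), (⟨a + 1, by omega⟩, b)} :
        Set (Fin n × Bool)) ⊆ (ladder n).neighborSet (⟨a, ha⟩, b) := by
      rintro p (rfl | rfl | rfl) <;> simp [ladder_adj]
      omega
    have h3 := Set.ncard_le_ncard hsub (Set.toFinite _)
    rw [Set.ncard_eq_three.2 ⟨_, _, _, ?_, ?_, ?_, rfl⟩] at h3
    · omega
    all_goals simp
  · rintro (h | h)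
    · simp only at h
      rw [Set.ncard_eq_two]
      refine ⟨(⟨a, ha⟩, !b), (⟨1, by omega⟩, b), by simp, ?_⟩
      ext ⟨⟨j, hj⟩, d⟩
      cases b <;> cases d <;> simp [ladder_adj] <;> omega
    · simp only at h
      rw [Set.ncard_eq_two]
      refine ⟨(⟨a, ha⟩, !b), (⟨a - 1, by omega⟩, b), by simp, ?_⟩
      ext ⟨⟨j, hj⟩, d⟩
      cases b <;> cases d <;> simp [ladder_adj] <;> omega

lemma ladder_ncard_degree_two {n : ℕ} (hn : 3 ≤ n) :
    {v | ((ladder n).neighborSet v).ncard = 2}.ncard = 4 := by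
  have : {v | ((ladder n).neighborSet v).ncard = 2} =
      ({⟨0, by omega⟩, ⟨n - 1, by omega⟩} : Set (Fin n)) ×ˢ (Set.univ : Set Bool) := by
    ext ⟨⟨a, ha⟩, b⟩
    rw [Set.mem_ofPred_eq, ladder_degree_two_iff hn]
    simp
    omega
  rw [this, Set.ncard_prod, Set.ncard_pair, Set.ncard_univ]
  · simp
  · simp
    omega

/-- For every `N` there is a finite simple 2-connected graph with more than
`N` vertices, exactly four vertices of degree 2, in which every vertex is
inessential: subtracting any vertex destroys 2-connectedness. -/
theorem exists_large_all_inessential (N : ℕ) :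
    ∃ (V : Type) (_ : Finite V) (G : SimpleGraph V),
      N < Nat.card V ∧ TwoConnected G ∧
      {v : V | (G.neighborSet v).ncard = 2}.ncard = 4 ∧
      ∀ v : V, ¬ TwoConnected (G.induce ({v}ᶜ : Set V)) := by
  refine ⟨Fin (N + 3) × Bool, inferInstance, ladder (N + 3), ?_,
    ladder_twoConnected (by omega), ladder_ncard_degree_two (by omega),
    ladder_not_twoConnected (by omega)⟩
  simp
  omega
end
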